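/- arXiv:2210.07550 — 2 statements merged into one kernel-verified Lean document; each statement's English description precedes it below -/
import Mathlib

section
/- Let q be a prime power and let w_1, …, w_n be positive integers; use weights (1, w_1, …, w_n) on 𝔽_q[x_0,…,x_n]. For 1 ≤ i ≤ n set d_i = (q−1)/gcd(q−1, w_i), and let Y = {(1, s_1^{w_1}, …, s_n^{w_n}) : s_1,…,s_n ∈ 𝔽_q^×} ⊆ 𝔽_q^{n+1}. Fix α ∈ ℕ and let M be the set of tuples (m_0, m_1, …, m_n) ∈ ℕ^{n+1} with m_0 + m_1 w_1 + ⋯ + m_n w_n = α and m_i ≤ d_i − 1 for all 1 ≤ i ≤ n. Then the family of functions Y → 𝔽_q obtained by evaluating the monomials x_0^{m_0} x_1^{m_1} ⋯ x_n^{m_n}, (m_0,…,m_n) ∈ M, at the points of Y is linearly independent over 𝔽_q and spans the code C_{α,Y}. -/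
open MvPolynomial

/-- Evaluation of multivariate polynomials at the points of a set `Y`, as a linear map. -/
noncomputable def evalOn {n : ℕ} (F : Type) [CommSemiring F] (Y : Set (Fin n → F)) :
    MvPolynomial (Fin n) F →ₗ[F] (Y → F) where
  toFun P := fun y => eval y.val P
  map_add' := by intro P Q; funext y; simp
  map_smul' := by intro c P; funext y; simp [MvPolynomial.smul_eval]

/-- The evaluation code: image of the space of weighted homogeneous polynomials of
degree `α` under evaluation at the points of `Y`. -/
noncomputable def code {n : ℕ} (F : Type) [Field F] (w : Fin n → ℕ) (α : ℕ)
    (Y : Set (Fin n → F)) : Submodule F (Y → F) :=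
  Submodule.map (evalOn F Y) (weightedHomogeneousSubmodule F w α)

/-!
View `Y` as a grid `∏ i, A i` of finite sets placed at `x₀ = 1`. On the grid, `X i ^ k` agrees with
its remainder modulo `∏ a ∈ A i, (X i - a)`, so every monomial agrees with a combination of reduced
monomials, those of exponent `< #(A i)` in each `X i`. Reduction only lowers exponents, and since
`x₀` has weight `1` and value `1`, a power of `x₀` makes up for the lost weight: this gives
spanning. A reduced polynomial vanishing on the grid is zero, and a monomial of weight `α` is
determined by its exponents in `x₁, …, xₙ`: this gives independence. Here `A i` is the group of
`w i`-th powers in the cyclic group of units, whose order is `d i`.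
-/

open Finset Finsupp

/-- The exponent vectors of the monomials that are reduced with respect to the grid `∏ i, A i`:
the exponent of `X i` is smaller than the number of elements of `A i`. -/
def reducedExponents {σ R : Type*} (A : σ → Finset R) : Set (σ →₀ ℕ) :=
  {m | ∀ i, m i < #(A i)}

section Reduction

variable {σ R : Type*} [CommRing R]

lemma exists_polynomial_eval_eq_pow [Nontrivial R] (A : Finset R) (k : ℕ) :
    ∃ p : Polynomial R, (∀ j ∈ p.support, j ≤ k ∧ j < #A) ∧ ∀ a ∈ A, p.eval a = a ^ k := by
  have hmonic := Lagrange.nodal_monic (s := A) (v := id)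
  refine ⟨Polynomial.X ^ k %ₘ Lagrange.nodal A id, fun j hj ↦ ⟨?_, ?_⟩, fun a ha ↦ ?_⟩
  · exact (Polynomial.le_natDegree_of_mem_supp j hj).trans <|
      Polynomial.natDegree_modByMonic_le_left.trans (Polynomial.natDegree_X_pow k).le
  · have hdeg := Polynomial.degree_modByMonic_lt (Polynomial.X ^ k) hmonic
    rw [Lagrange.degree_nodal] at hdeg
    exact_mod_cast (Polynomial.le_degree_of_mem_supp j hj).trans_lt hdeg
  · have hroot : (Lagrange.nodal A id).eval a = 0 := Lagrange.eval_nodal_at_node (v := id) ha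
    simpa [hroot] using congrArg (Polynomial.eval a)
      (Polynomial.modByMonic_add_div (Polynomial.X ^ k) (Lagrange.nodal A id))

lemma exists_mem_restrictSupport_eval_eq_monomial [Finite σ] [Nontrivial R]
    (A : σ → Finset R) (m : σ →₀ ℕ) :
    ∃ P ∈ restrictSupport R (Set.Iic m ∩ reducedExponents A),
      ∀ t, (∀ i, t i ∈ A i) → eval t P = eval t (monomial m 1) := by
  classical
  have := Fintype.ofFinite σ
  choose p hsupp heval using fun i ↦ exists_polynomial_eval_eq_pow (A i) (m i)
  refine ⟨∑ f ∈ Fintype.piFinset fun i ↦ (p i).support,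
    monomial (equivFunOnFinite.symm f) (∏ i, (p i).coeff (f i)), ?_, fun t ht ↦ ?_⟩
  · refine Submodule.sum_mem _ fun f hf ↦ (monomial_mem_restrictSupport R).2 (.inl ?_)
    rw [Fintype.mem_piFinset] at hf
    exact ⟨fun i ↦ (hsupp i _ (hf i)).1, fun i ↦ (hsupp i _ (hf i)).2⟩
  · calc
      _ = ∑ f ∈ Fintype.piFinset fun i ↦ (p i).support, ∏ i, (p i).coeff (f i) * t i ^ f i := by
        simp [eval_monomial, Finsupp.prod_fintype, prod_mul_distrib]
      _ = ∏ i, (p i).eval (t i) := by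
        simp only [Polynomial.eval_eq_sum, Polynomial.sum_def, prod_univ_sum]
      _ = eval t (monomial m 1) := by
        simp [eval_monomial, Finsupp.prod_fintype, heval _ _ (ht _)]

lemma eq_zero_of_mem_restrictSupport_reducedExponents [Finite σ] [IsDomain R]
    {A : σ → Finset R} {P : MvPolynomial σ R} (hP : P ∈ restrictSupport R (reducedExponents A))
    (hvanish : ∀ t, (∀ i, t i ∈ A i) → eval t P = 0) : P = 0 := by
  by_contra hne
  obtain ⟨m, hm⟩ := support_nonempty.2 hne
  have hdeg (i : σ) : P.degreeOf i < #(A i) :=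
    (degreeOf_lt_iff (Nat.zero_lt_of_lt (hP hm i))).2 fun f hf ↦ hP hf i
  exact hne (eq_zero_of_eval_zero_at_prod_finset P A hdeg hvanish)

end Reduction

lemma linearIndependent_evalOn_monomial_reducedExponents {n : ℕ} {R : Type} [CommRing R]
    [IsDomain R] (A : Fin n → Finset R) :
    LinearIndependent R fun m : reducedExponents A ↦
      evalOn R (Set.univ.pi fun i ↦ (A i : Set R)) (monomial m.val 1) := by
  have hmonomials : LinearIndependent R fun m : reducedExponents A ↦
      (monomial m.val 1 : MvPolynomial (Fin n) R) := by
    simpa only [coe_basisMonomials, Function.comp_def] using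
      (basisMonomials (Fin n) R).linearIndependent.comp _ Subtype.val_injective
  refine hmonomials.map (Submodule.disjoint_def.2 fun P hP hker ↦ ?_)
  rw [← Set.image_eq_range (monomial · 1), ← restrictSupport_eq_span] at hP
  exact eq_zero_of_mem_restrictSupport_reducedExponents hP fun t ht ↦
    congrFun hker ⟨t, fun i _ ↦ ht i⟩

lemma code_eq_span_image_monomial {n : ℕ} {F : Type} [Field F] (w : Fin n → ℕ) (α : ℕ)
    (Y : Set (Fin n → F)) :
    code F w α Y =
      Submodule.span F ((fun m ↦ evalOn F Y (monomial m 1)) '' {m | weight w m = α}) := by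
  have hspan : weightedHomogeneousSubmodule F w α =
      Submodule.span F ((monomial · 1) '' {m | weight w m = α}) := by
    rw [weightedHomogeneousSubmodule_eq_finsupp_supported, ← restrictSupport_eq_span]
    rfl
  rw [code, hspan, Submodule.map_span, Set.image_image]

section Homogenization

variable {n : ℕ}

lemma weight_cons_one (w : Fin n → ℕ) (m : Fin (n + 1) →₀ ℕ) :
    weight (Fin.cons 1 w : Fin (n + 1) → ℕ) m = m 0 + weight w m.tail := by
  simp [weight_eq_sum, Fin.sum_univ_succ, tail_apply]

lemma eval_cons_one_monomial {R : Type*} [CommSemiring R] (t : Fin n → R)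
    (m : Fin (n + 1) →₀ ℕ) (c : R) :
    eval (Fin.cons 1 t : Fin (n + 1) → R) (monomial m c) = eval t (monomial m.tail c) := by
  simp [eval_monomial, Finsupp.prod_fintype, Fin.prod_univ_succ, tail_apply]

/-- The points `(1, t₁, …, tₙ)` with `tᵢ ∈ A i`, the affine grid `∏ i, A i` placed in the chart
`x₀ = 1`. -/
def homogenizedGrid {R : Type*} [One R] (A : Fin n → Finset R) : Set (Fin (n + 1) → R) :=
  {y | ∃ t : Fin n → R, (∀ i, t i ∈ A i) ∧ y = Fin.cons 1 t}

/-- The exponent vectors `(m₀, …, mₙ)` of weighted degree `α` for the weights `(1, w₁, …, wₙ)`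
whose dehomogenization `(m₁, …, mₙ)` is reduced with respect to the grid `∏ i, A i`. -/
def reducedExponentsOfWeight {R : Type*} (w : Fin n → ℕ) (α : ℕ) (A : Fin n → Finset R) :
    Set (Fin (n + 1) →₀ ℕ) :=
  {m | weight (Fin.cons 1 w : Fin (n + 1) → ℕ) m = α ∧ m.tail ∈ reducedExponents A}

lemma cons_mem_reducedExponentsOfWeight {R : Type*} {w : Fin n → ℕ} {α : ℕ}
    {A : Fin n → Finset R} {f : Fin n →₀ ℕ} (hf : f ∈ reducedExponents A)
    (hweight : weight w f ≤ α) :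
    cons (α - weight w f) f ∈ reducedExponentsOfWeight w α A := by
  refine ⟨?_, by simpa only [tail_cons] using hf⟩
  rw [weight_cons_one, cons_zero, tail_cons, Nat.sub_add_cancel hweight]

lemma weight_le_of_le_tail {w : Fin n → ℕ} {m : Fin (n + 1) →₀ ℕ} {f : Fin n →₀ ℕ}
    (hle : f ≤ m.tail) : weight w f ≤ weight (Fin.cons 1 w : Fin (n + 1) → ℕ) m := by
  rw [weight_cons_one]
  refine le_add_left ?_
  simp only [weight_eq_sum]
  gcongr with i
  exact hle i

lemma injOn_tail_weight_cons_one (w : Fin n → ℕ) (α : ℕ) :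
    Set.InjOn (tail (M := ℕ)) {m | weight (Fin.cons 1 w : Fin (n + 1) → ℕ) m = α} := by
  intro m hm m' hm' htail
  have hzero : m 0 = m' 0 := by
    rw [Set.mem_ofPred_eq, weight_cons_one] at hm hm'
    rw [htail] at hm
    lia
  rw [← cons_tail m, ← cons_tail m', hzero, htail]

variable {F : Type} [Field F]

lemma linearIndependent_evalOn_monomial_reducedExponentsOfWeight (w : Fin n → ℕ) (α : ℕ)
    (A : Fin n → Finset F) :
    LinearIndependent F fun m : reducedExponentsOfWeight w α A ↦
      evalOn F (homogenizedGrid A) (monomial m.val 1) := by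
  let homogenize (t : Set.univ.pi fun i ↦ (A i : Set F)) : homogenizedGrid A :=
    ⟨Fin.cons 1 t.val, t.val, fun i ↦ t.2 i trivial, rfl⟩
  let dehomogenize (m : reducedExponentsOfWeight w α A) : reducedExponents A :=
    ⟨m.val.tail, m.2.2⟩
  have hinj : Function.Injective dehomogenize := fun m m' h ↦
    Subtype.ext (injOn_tail_weight_cons_one w α m.2.1 m'.2.1 (congrArg Subtype.val h))
  have hcomp : (LinearMap.funLeft F F homogenize ∘ fun m : reducedExponentsOfWeight w α A ↦
      evalOn F (homogenizedGrid A) (monomial m.val 1)) =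
      (fun m : reducedExponents A ↦ evalOn F (Set.univ.pi fun i ↦ (A i : Set F))
        (monomial m.val 1)) ∘ dehomogenize := by
    ext m t
    exact eval_cons_one_monomial t.val m.val 1
  refine .of_comp (LinearMap.funLeft F F homogenize) ?_
  rw [hcomp]
  exact (linearIndependent_evalOn_monomial_reducedExponents A).comp dehomogenize hinj

lemma evalOn_monomial_mem_span_reducedExponentsOfWeight {w : Fin n → ℕ} {α : ℕ}
    (A : Fin n → Finset F) {m : Fin (n + 1) →₀ ℕ}
    (hm : weight (Fin.cons 1 w : Fin (n + 1) → ℕ) m = α) :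
    evalOn F (homogenizedGrid A) (monomial m 1) ∈
      Submodule.span F ((fun m ↦ evalOn F (homogenizedGrid A) (monomial m 1)) ''
        reducedExponentsOfWeight w α A) := by
  obtain ⟨P, hP, heval⟩ := exists_mem_restrictSupport_eval_eq_monomial A m.tail
  let rehomogenize (f : Fin n →₀ ℕ) : Fin (n + 1) →₀ ℕ := cons (α - weight w f) f
  have hmem (f) (hf : f ∈ P.support) : rehomogenize f ∈ reducedExponentsOfWeight w α A :=
    cons_mem_reducedExponentsOfWeight (hP hf).2 (hm ▸ weight_le_of_le_tail (hP hf).1)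
  have hexpand : evalOn F (homogenizedGrid A) (monomial m 1) = ∑ f ∈ P.support,
      coeff f P • evalOn F (homogenizedGrid A) (monomial (rehomogenize f) 1) := by
    funext ⟨y, t, ht, hy⟩
    subst hy
    calc
      eval (Fin.cons 1 t : Fin (n + 1) → F) (monomial m 1) = eval t P := by
        rw [eval_cons_one_monomial, heval t ht]
      _ = ∑ f ∈ P.support, coeff f P * eval t (monomial f 1) := by
        simp [eval_eq]
      _ = ∑ f ∈ P.support, coeff f P *
          eval (Fin.cons 1 t : Fin (n + 1) → F) (monomial (rehomogenize f) 1) := by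
        simp only [eval_cons_one_monomial, rehomogenize, tail_cons]
      _ = _ := by simp [evalOn]
  rw [hexpand]
  exact Submodule.sum_mem _ fun f hf ↦
    Submodule.smul_mem _ _ (Submodule.subset_span ⟨_, hmem f hf, rfl⟩)

end Homogenization

theorem stmt6_general {n : ℕ} {F : Type} [Field F] (w : Fin n → ℕ) (α : ℕ)
    (A : Fin n → Finset F) :
    LinearIndependent F (fun m : reducedExponentsOfWeight w α A ↦
        evalOn F (homogenizedGrid A) (monomial m.val (1 : F))) ∧
      Submodule.span F (Set.range fun m : reducedExponentsOfWeight w α A ↦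
        evalOn F (homogenizedGrid A) (monomial m.val (1 : F))) =
        code F (Fin.cons 1 w) α (homogenizedGrid A) := by
  refine ⟨linearIndependent_evalOn_monomial_reducedExponentsOfWeight w α A, ?_⟩
  rw [code_eq_span_image_monomial,
    ← Set.image_eq_range fun m ↦ evalOn F (homogenizedGrid A) (monomial m (1 : F))]
  refine le_antisymm (Submodule.span_mono (Set.image_mono fun m hm ↦ hm.1)) ?_
  rw [Submodule.span_le]
  rintro _ ⟨m, hm, rfl⟩
  exact evalOn_monomial_mem_span_reducedExponentsOfWeight A hm

section PowerValues

variable (F : Type*) [Field F] [Fintype F]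

/-- The finite set of `k`-th powers of the nonzero elements of `F`. -/
noncomputable def unitPowers (k : ℕ) : Finset F :=
  (Set.finite_range fun s : Fˣ ↦ (s : F) ^ k).toFinset

variable {F}

lemma mem_unitPowers {k : ℕ} {a : F} : a ∈ unitPowers F k ↔ ∃ s : Fˣ, (s : F) ^ k = a := by
  simp [unitPowers]

lemma card_unitPowers (k : ℕ) :
    #(unitPowers F k) = (Fintype.card F - 1) / (Fintype.card F - 1).gcd k := by
  have himage : (unitPowers F k : Set F) =
      Units.val '' ((powMonoidHom k : Fˣ →* Fˣ).range : Set Fˣ) := by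
    ext a
    simp [mem_unitPowers]
  calc
    #(unitPowers F k) = Nat.card (powMonoidHom k : Fˣ →* Fˣ).range := by
      rw [← Set.ncard_coe_finset, himage, Set.ncard_image_of_injective _ Units.val_injective]
      rfl
    _ = (Fintype.card F - 1) / (Fintype.card F - 1).gcd k := by
      rw [IsCyclic.card_powMonoidHom_range, Nat.card_units, Nat.card_eq_fintype_card]

lemma card_unitPowers_pos (k : ℕ) : 0 < #(unitPowers F k) :=
  card_pos.2 ⟨1, mem_unitPowers.2 ⟨1, by simp⟩⟩

lemma homogenizedGrid_unitPowers {n : ℕ} (w : Fin n → ℕ) :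
    homogenizedGrid (fun i ↦ unitPowers F (w i)) =
      {y | ∃ s : Fin n → Fˣ, y = Fin.cons 1 fun i ↦ (s i : F) ^ w i} := by
  ext y
  simp only [homogenizedGrid, mem_unitPowers, Set.mem_ofPred_eq]
  constructor
  · rintro ⟨t, ht, rfl⟩
    choose s hs using ht
    exact ⟨s, by simp only [hs]⟩
  · rintro ⟨s, rfl⟩
    exact ⟨_, fun i ↦ ⟨s i, rfl⟩, rfl⟩

lemma reducedExponentsOfWeight_unitPowers {n : ℕ} (w d : Fin n → ℕ) (α : ℕ)
    (hd : ∀ i, d i = (Fintype.card F - 1) / (Fintype.card F - 1).gcd (w i)) :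
    reducedExponentsOfWeight w α (fun i ↦ unitPowers F (w i)) =
      {m | ∑ i, m i * (Fin.cons 1 w : Fin (n + 1) → ℕ) i = α ∧
        ∀ i : Fin n, m i.succ ≤ d i - 1} := by
  have hcard (i : Fin n) : #(unitPowers F (w i)) = d i := (card_unitPowers (w i)).trans (hd i).symm
  have hpos (i : Fin n) : 0 < d i := hcard i ▸ card_unitPowers_pos (w i)
  ext m
  simp [reducedExponentsOfWeight, reducedExponents, weight_eq_sum, tail_apply, hcard,
    Nat.le_sub_one_iff_lt (hpos _)]

end PowerValues

/-- With `q` the cardinality of a finite field `𝔽`, positive integers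
`w 1, …, w n`, weights `(1, w₁, …, wₙ)` on `𝔽[x₀, …, xₙ]`,
`d i = (q-1)/gcd(q-1, w i)` and `Y = {(1, s₁^{w₁}, …, sₙ^{wₙ}) : sᵢ ∈ 𝔽ˣ}`, and `M`
the set of exponent vectors `m` with `m₀ + m₁w₁ + ⋯ + mₙwₙ = α` and `mᵢ ≤ dᵢ - 1`
for `1 ≤ i ≤ n`, the family of functions `Y → 𝔽` obtained by evaluating the
monomials `x^m`, `m ∈ M`, is linearly independent and spans the code `C_{α,Y}`. -/
theorem stmt6 (n : ℕ) (F : Type) [Field F] [Fintype F] (q : ℕ) (hq : Fintype.card F = q)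
    (w : Fin n → ℕ) (hw : ∀ i, 0 < w i)
    (d : Fin n → ℕ) (hd : ∀ i, d i = (q - 1) / Nat.gcd (q - 1) (w i))
    (Y : Set (Fin (n + 1) → F))
    (hY : Y = {y | ∃ s : Fin n → Fˣ, y = Fin.cons 1 fun i => (s i : F) ^ w i})
    (α : ℕ)
    (M : Set (Fin (n + 1) →₀ ℕ))
    (hM : M = {m | (∑ i, m i * (Fin.cons 1 w : Fin (n + 1) → ℕ) i) = α ∧ ∀ i : Fin n, m i.succ ≤ d i - 1}) :
    LinearIndependent F (fun m : M => evalOn F Y (monomial m.val (1 : F))) ∧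
      Submodule.span F (Set.range fun m : M => evalOn F Y (monomial m.val (1 : F))) =
        code F (Fin.cons 1 w) α Y := by
  subst hq hY hM
  rw [← homogenizedGrid_unitPowers, ← reducedExponentsOfWeight_unitPowers w d α hd]
  exact stmt6_general w α _
end

section
/- Let q be a prime power, a a positive integer, and use weights (1, 1, a) on 𝔽_q[x_0, x_1, x_2]. Set d_2 = (q−1)/gcd(q−1, a) and Y = {(1, t_1, t_2^a) : t_1, t_2 ∈ 𝔽_q^×} ⊆ 𝔽_q^3. If 0 ≤ α ≤ q−2, then the minimum distance of the code C_{α,Y} equals d_2·(q − 1 − α); that is, every nonzero codeword c ∈ C_{α,Y} satisfies #{P ∈ Y : c(P) ≠ 0} ≥ d_2(q−1−α), and some nonzero codeword attains this value. -/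
open MvPolynomial

/-!
Setting `x₀ = 1` turns a form of degree `α` into a polynomial `g` in the remaining variables, of
weighted degree at most `α`, to be evaluated on a box `∏ i, S i`. By the monomial form of the
Schwartz–Zippel lemma, the proportion of zeros of `g` in the box is at most
`∑ i, m i / #(S i)` for some exponent `m` of `g`. If `k ≤ w i * #(S i)` for all `i`, this sum is at
most `∑ i, m i * w i / k ≤ α / k`. When `k = #(S i₀)` and `w i₀ = 1`, the product of `α` linear
forms `xᵢ - s * x₀` with distinct `s ∈ S i₀`, where `xᵢ` is the variable evaluated on `S i₀`,
attains the bound. In the case of the torus, the box is the product of `Fˣ` and its `a`-th powers,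
which number `d₂ = (q - 1) / gcd (q - 1) a`, and `q - 1 = gcd (q - 1) a * d₂ ≤ a * d₂`.
-/

section

open Finset Matrix

section Polynomial

variable {R : Type*} {n : ℕ}

lemma card_eval_eq_zero_mul_le [CommRing R] [IsDomain R] [DecidableEq R]
    {g : MvPolynomial (Fin n) R} (hg : g ≠ 0) {w : Fin n → ℕ} {S : Fin n → Finset R} {k : ℕ}
    (hk : ∀ i, k ≤ w i * #(S i)) :
    #{x ∈ Fintype.piFinset S | eval x g = 0} * k ≤ g.weightedTotalDegree w * ∏ i, #(S i) := by
  rcases k.eq_zero_or_pos with rfl | hk0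
  · simp
  have hS (i : Fin n) : 0 < #(S i) := Nat.pos_of_mul_pos_left (hk0.trans_le (hk i))
  have monomial_bound (m) (hm : m ∈ g.support) :
      ∑ i, (m i / #(S i) : ℚ≥0) ≤ g.weightedTotalDegree w / k := calc
    _ ≤ ∑ i, (m i * w i / k : ℚ≥0) := sum_le_sum fun i _ ↦ by
      rw [div_le_div_iff₀ (mod_cast hS i) (mod_cast hk0), mul_assoc]
      gcongr
      exact_mod_cast hk i
    _ = (Finsupp.weight w m : ℕ) / k := by
      rw [Finsupp.weight_apply, Finsupp.sum_fintype _ _ (by simp), ← sum_div]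
      simp only [smul_eq_mul, Nat.cast_sum, Nat.cast_mul]
    _ ≤ _ := by gcongr; exact le_weightedTotalDegree w hm
  have density := (schwartz_zippel_sup_sum hg S).trans (Finset.sup_le monomial_bound)
  rw [div_le_div_iff₀ (prod_pos fun i _ ↦ mod_cast hS i) (mod_cast hk0)] at density
  exact_mod_cast density

lemma sub_mul_prod_card_le_card_eval_ne_zero_mul [CommRing R] [IsDomain R] [DecidableEq R]
    {g : MvPolynomial (Fin n) R} (hg : g ≠ 0) {w : Fin n → ℕ} {S : Fin n → Finset R} {k : ℕ}
    (hk : ∀ i, k ≤ w i * #(S i)) :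
    (k - g.weightedTotalDegree w) * ∏ i, #(S i) ≤
      #{x ∈ Fintype.piFinset S | eval x g ≠ 0} * k := by
  have zeros_le := card_eval_eq_zero_mul_le hg hk
  have total := card_filter_add_card_filter_not (s := Fintype.piFinset S) (eval · g = 0)
  rw [Fintype.card_piFinset] at total
  rw [Nat.sub_mul, Nat.sub_le_iff_le_add, ← total, mul_comm k, add_mul, add_comm]
  rw [← total] at zeros_le
  gcongr

lemma card_eval_prod_X_sub_C_ne_zero [CommRing R] [IsDomain R] [DecidableEq R]
    {ι : Type*} [Fintype ι] [DecidableEq ι] {S : ι → Finset R} {i : ι} {T : Finset R}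
    (hT : T ⊆ S i) :
    #{x ∈ Fintype.piFinset S | eval x (∏ s ∈ T, (X i - C s)) ≠ 0} =
      (#(S i) - #T) * ∏ j ∈ {i}ᶜ, #(S j) := by
  have nonzeros_eq : {x ∈ Fintype.piFinset S | eval x (∏ s ∈ T, (X i - C s)) ≠ 0} =
      Fintype.piFinset (Function.update S i (S i \ T)) := by
    rw [Fintype.piFinset_update_eq_filter_piFinset_mem S i sdiff_subset]
    refine filter_congr fun x hx ↦ ?_
    have hxi := Fintype.mem_piFinset.1 hx i
    simp [prod_eq_zero_iff, sub_eq_zero, hxi]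
  rw [nonzeros_eq, Fintype.card_piFinset]
  simp_rw [Function.apply_update fun _ ↦ card]
  rw [prod_update_of_mem (mem_univ i), card_sdiff_of_subset hT, compl_eq_univ_sdiff]

/-- Dehomogenization of a polynomial at `x₀ = 1`, used to turn codewords into evaluations on a box.
The remaining variables `x₁, …, xₙ` are renumbered as `x₀, …, xₙ₋₁`. -/
noncomputable def dehomogenize [CommSemiring R] :
    MvPolynomial (Fin (n + 1)) R →ₐ[R] MvPolynomial (Fin n) R :=
  aeval (vecCons 1 X)

lemma eval_dehomogenize [CommSemiring R] (x : Fin n → R) (P : MvPolynomial (Fin (n + 1)) R) :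
    eval x (dehomogenize P) = eval (vecCons 1 x) P := by
  have aeval_comp : (aeval x).comp dehomogenize =
      (aeval (vecCons 1 x) : MvPolynomial (Fin (n + 1)) R →ₐ[R] R) := by
    ext i
    cases i using Fin.cases <;> simp [dehomogenize]
  exact DFunLike.congr_fun aeval_comp P

lemma dehomogenize_monomial [CommSemiring R] (m : Fin (n + 1) →₀ ℕ) (c : R) :
    dehomogenize (monomial m c) = monomial m.tail c := by
  rw [dehomogenize, aeval_monomial, Finsupp.prod_fintype _ _ fun _ ↦ pow_zero _,
    Fin.prod_univ_succ, monomial_eq, Finsupp.prod_fintype _ _ fun _ ↦ pow_zero _]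
  simp [algebraMap_eq, Finsupp.tail_apply]

lemma weight_vecCons {M : Type*} [AddCommMonoid M] (w₀ : M) (w : Fin n → M)
    (m : Fin (n + 1) →₀ ℕ) :
    Finsupp.weight (vecCons w₀ w) m = m 0 • w₀ + Finsupp.weight w m.tail := by
  simp [Finsupp.weight_apply, Finsupp.sum_fintype, Fin.sum_univ_succ, Finsupp.tail_apply]

lemma weightedTotalDegree_dehomogenize_le [CommSemiring R]
    {w₀ : ℕ} {w : Fin n → ℕ} {α : ℕ} {P : MvPolynomial (Fin (n + 1)) R}
    (hP : P.IsWeightedHomogeneous (vecCons w₀ w) α) :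
    (dehomogenize P).weightedTotalDegree w ≤ α := by
  classical
  refine Finset.sup_le fun m hm ↦ ?_
  rw [P.as_sum, map_sum] at hm
  obtain ⟨m', hm', hm⟩ := mem_biUnion.1 (support_sum hm)
  rw [dehomogenize_monomial] at hm
  obtain rfl := mem_singleton.1 (support_monomial_subset hm)
  have weight_eq := hP (mem_support_iff.1 hm')
  rw [weight_vecCons, smul_eq_mul] at weight_eq
  omega

lemma isWeightedHomogeneous_prod_X_sub_C_mul_X [CommRing R] {σ : Type*} {w : σ → ℕ} {i j : σ}
    (hi : w i = 1) (hj : w j = 1) (T : Finset R) :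
    (∏ s ∈ T, (X i - C s * X j)).IsWeightedHomogeneous w #T := by
  have linear (s : R) : (X i - C s * X j).IsWeightedHomogeneous w 1 :=
    .sub (hi ▸ isWeightedHomogeneous_X R w i) (.C_mul (hj ▸ isWeightedHomogeneous_X R w j) s)
  simpa using IsWeightedHomogeneous.prod T _ _ fun s _ ↦ linear s

lemma ncard_evalOn_vecCons_ne_zero {F : Type} [CommSemiring F] [DecidableEq F]
    (S : Fin n → Finset F) (P : MvPolynomial (Fin (n + 1)) F) :
    {p : vecCons 1 '' (Fintype.piFinset S : Set (Fin n → F)) | evalOn F _ P p ≠ 0}.ncard =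
      #{x ∈ Fintype.piFinset S | eval x (dehomogenize P) ≠ 0} := by
  have image_eq : Subtype.val ''
      {p : vecCons 1 '' (Fintype.piFinset S : Set (Fin n → F)) | evalOn F _ P p ≠ 0} =
      vecCons 1 '' {x ∈ Fintype.piFinset S | eval x (dehomogenize P) ≠ 0} := by
    ext y
    constructor
    · rintro ⟨⟨_, x, hx, rfl⟩, hPx, rfl⟩
      exact ⟨x, ⟨hx, by rwa [eval_dehomogenize]⟩, rfl⟩
    · rintro ⟨x, ⟨hx, hPx⟩, rfl⟩
      exact ⟨⟨_, x, hx, rfl⟩, by rwa [eval_dehomogenize] at hPx, rfl⟩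
  rw [← Set.ncard_image_of_injective _ Subtype.val_injective, image_eq,
    Set.ncard_image_of_injective _ fun x y h ↦ (vecCons_inj.1 h).2, ← Set.ncard_coe_finset,
    coe_filter]

end Polynomial

section Torus

lemma card_image_pow_eq_card_div_gcd {G : Type*} [CommGroup G] [IsCyclic G] [Fintype G]
    [DecidableEq G] (a : ℕ) :
    #(univ.image fun g : G ↦ g ^ a) = Fintype.card G / (Fintype.card G).gcd a := by
  rw [← Nat.card_eq_fintype_card, ← IsCyclic.card_powMonoidHom_range, ← Set.ncard_coe_finset,
    ← Nat.card_coe_set_eq]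
  simp only [coe_image, coe_univ, Set.image_univ]
  rfl

lemma le_mul_div_gcd (m : ℕ) {a : ℕ} (ha : 0 < a) : m ≤ a * (m / m.gcd a) := calc
  m = m.gcd a * (m / m.gcd a) := (Nat.mul_div_cancel' (m.gcd_dvd_left a)).symm
  _ ≤ a * (m / m.gcd a) := Nat.mul_le_mul_right _ (Nat.gcd_le_right m ha)

/-- The ranges of `t₁` and `t₂ ^ a` for units `t₁, t₂`: the points `(1, t₁, t₂ ^ a)` whose
coordinates run over these two sets form the evaluation set `Y`. -/
def torusFactors (F : Type*) [Field F] [Fintype F] [DecidableEq F] (a : ℕ) : Fin 2 → Finset F :=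
  ![univ.image fun t : Fˣ ↦ (t : F), univ.image fun t : Fˣ ↦ (t : F) ^ a]

variable {F : Type*} [Field F] [Fintype F] [DecidableEq F]

lemma card_torusFactors_zero (a : ℕ) : #(torusFactors F a 0) = Fintype.card F - 1 :=
  (card_image_of_injective _ Units.val_injective).trans (by simp [Fintype.card_units])

lemma lt_card_torusFactors_zero {α : ℕ} (hα : α ≤ Fintype.card F - 2) (a : ℕ) :
    α < #(torusFactors F a 0) := by
  have one_lt_card : 1 < Fintype.card F := Fintype.one_lt_card
  rw [card_torusFactors_zero]
  omega

lemma card_torusFactors_one (a : ℕ) :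
    #(torusFactors F a 1) = (Fintype.card F - 1) / (Fintype.card F - 1).gcd a := by
  have image_units_val : torusFactors F a 1 = (univ.image fun t : Fˣ ↦ t ^ a).image Units.val := by
    simp [torusFactors, image_image, Function.comp_def]
  rw [image_units_val, card_image_of_injective _ Units.val_injective,
    card_image_pow_eq_card_div_gcd, Fintype.card_units]

lemma vecCons_image_piFinset_torusFactors (a : ℕ) :
    vecCons 1 '' (Fintype.piFinset (torusFactors F a) : Set (Fin 2 → F)) =
      {y | ∃ t₁ t₂ : Fˣ, y = ![1, (t₁ : F), (t₂ : F) ^ a]} := by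
  ext y
  constructor
  · rintro ⟨x, hx, rfl⟩
    have hx (i) : x i ∈ torusFactors F a i := Fintype.mem_piFinset.1 hx i
    obtain ⟨t₁, -, h₁⟩ := mem_image.1 (hx 0)
    obtain ⟨t₂, -, h₂⟩ := mem_image.1 (hx 1)
    have hx_eq : x = ![(t₁ : F), (t₂ : F) ^ a] :=
      funext (Fin.forall_fin_two.2 ⟨h₁.symm, h₂.symm⟩)
    exact ⟨t₁, t₂, congrArg (vecCons 1) hx_eq⟩
  · rintro ⟨t₁, t₂, rfl⟩
    refine ⟨![t₁, t₂ ^ a], ?_, rfl⟩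
    simp [torusFactors, Fin.forall_fin_two]

lemma card_torusFactors_zero_le {a : ℕ} (ha : 0 < a) :
    ∀ i, #(torusFactors F a 0) ≤ ![1, a] i * #(torusFactors F a i) := by
  rw [Fin.forall_fin_two, card_torusFactors_zero, card_torusFactors_one]
  exact ⟨(one_mul _).ge, le_mul_div_gcd _ ha⟩

end Torus

section Code

variable {F : Type} [Field F] {n : ℕ}

lemma sub_mul_prod_card_le_ncard_of_mem_code {w : Fin n → ℕ} {S : Fin n → Finset F} {i₀ : Fin n}
    (hS : ∀ i, #(S i₀) ≤ w i * #(S i)) {w₀ α : ℕ}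
    {c : vecCons 1 '' (Fintype.piFinset S : Set (Fin n → F)) → F}
    (hc : c ∈ code F (vecCons w₀ w) α (vecCons 1 '' (Fintype.piFinset S : Set (Fin n → F))))
    (hc0 : c ≠ 0) :
    (#(S i₀) - α) * ∏ i ∈ {i₀}ᶜ, #(S i) ≤ {p | c p ≠ 0}.ncard := by
  classical
  rcases (#(S i₀)).eq_zero_or_pos with hS0 | hS0
  · simp [hS0]
  obtain ⟨P, hP, rfl⟩ := hc
  have dehomogenize_ne_zero : dehomogenize P ≠ 0 := by
    refine fun h ↦ hc0 (funext ?_)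
    rintro ⟨_, x, -, rfl⟩
    simpa [h, evalOn] using (eval_dehomogenize x P).symm
  have count := sub_mul_prod_card_le_card_eval_ne_zero_mul dehomogenize_ne_zero hS
  rw [Fintype.prod_eq_mul_prod_compl i₀, mul_left_comm, mul_comm] at count
  rw [ncard_evalOn_vecCons_ne_zero]
  refine le_trans ?_ (Nat.le_of_mul_le_mul_right count hS0)
  gcongr
  exact weightedTotalDegree_dehomogenize_le hP

lemma exists_mem_code_ncard_eq_sub_mul_prod_card {w : Fin n → ℕ} {i₀ : Fin n} (hw : w i₀ = 1)
    (S : Fin n → Finset F) {α : ℕ} (hα : α ≤ #(S i₀)) :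
    ∃ c ∈ code F (vecCons 1 w) α (vecCons 1 '' (Fintype.piFinset S : Set (Fin n → F))),
      {p | c p ≠ 0}.ncard = (#(S i₀) - α) * ∏ i ∈ {i₀}ᶜ, #(S i) := by
  classical
  obtain ⟨T, hT, rfl⟩ := exists_subset_card_eq hα
  refine ⟨_, ⟨∏ s ∈ T, (X i₀.succ - C s * X 0),
    isWeightedHomogeneous_prod_X_sub_C_mul_X (i := i₀.succ) (j := 0) hw rfl T, rfl⟩, ?_⟩
  have dehomogenize_eq : dehomogenize (∏ s ∈ T, (X i₀.succ - C s * X 0)) =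
      ∏ s ∈ T, (X i₀ - C s) := by
    simp [dehomogenize, algebraMap_eq]
  rw [ncard_evalOn_vecCons_ne_zero, dehomogenize_eq, card_eval_prod_X_sub_C_ne_zero hT]

theorem stmt9_general (w : Fin n → ℕ) (S : Fin n → Finset F) (i₀ : Fin n) (hw : w i₀ = 1)
    (hS : ∀ i, #(S i₀) ≤ w i * #(S i)) (Y : Set (Fin (n + 1) → F))
    (hY : Y = vecCons 1 '' (Fintype.piFinset S : Set (Fin n → F))) (α : ℕ) (hα : α < #(S i₀)) :
    (∀ c ∈ code F (vecCons 1 w) α Y, c ≠ 0 →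
        (#(S i₀) - α) * ∏ i ∈ {i₀}ᶜ, #(S i) ≤ {p : Y | c p ≠ 0}.ncard) ∧
      ∃ c ∈ code F (vecCons 1 w) α Y, c ≠ 0 ∧
        {p : Y | c p ≠ 0}.ncard = (#(S i₀) - α) * ∏ i ∈ {i₀}ᶜ, #(S i) := by
  subst hY
  refine ⟨fun c ↦ sub_mul_prod_card_le_ncard_of_mem_code hS, ?_⟩
  obtain ⟨c, hc, hcard⟩ := exists_mem_code_ncard_eq_sub_mul_prod_card hw S hα.le
  refine ⟨c, hc, ?_, hcard⟩
  rintro rfl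
  have hpos : 0 < (#(S i₀) - α) * ∏ i ∈ {i₀}ᶜ, #(S i) :=
    Nat.mul_pos (by omega) <| prod_pos fun i _ ↦
      Nat.pos_of_mul_pos_left <| (Nat.zero_le α).trans_lt hα |>.trans_le (hS i)
  simp [← hcard] at hpos

end Code

end

/-- With `q` the cardinality of a finite field `𝔽`, a positive
integer `a`, weights `(1, 1, a)` on `𝔽[x₀, x₁, x₂]`, `d₂ = (q-1)/gcd(q-1, a)` and
`Y = {(1, t₁, t₂^a) : t₁, t₂ ∈ 𝔽ˣ}`: if `0 ≤ α ≤ q-2` then the minimum distance of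
`C_{α,Y}` equals `d₂(q-1-α)`: every nonzero codeword has at least `d₂(q-1-α)`
nonzero coordinates, and some nonzero codeword attains this value. -/
theorem stmt9 (F : Type) [Field F] [Fintype F] (q : ℕ) (hq : Fintype.card F = q)
    (a : ℕ) (ha : 0 < a)
    (d2 : ℕ) (hd2 : d2 = (q - 1) / Nat.gcd (q - 1) a)
    (Y : Set (Fin 3 → F))
    (hY : Y = {y | ∃ t1 t2 : Fˣ, y = ![1, (t1 : F), (t2 : F) ^ a]})
    (α : ℕ) (hα : α ≤ q - 2) :
    (∀ c ∈ code F ![1, 1, a] α Y, c ≠ 0 →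
        d2 * (q - 1 - α) ≤ {p : Y | c p ≠ 0}.ncard) ∧
      ∃ c ∈ code F ![1, 1, a] α Y, c ≠ 0 ∧
        {p : Y | c p ≠ 0}.ncard = d2 * (q - 1 - α) := by
  classical
  subst hq hd2
  simpa [card_torusFactors_zero, card_torusFactors_one, mul_comm,
    show ({0}ᶜ : Finset (Fin 2)) = {1} from rfl] using
    stmt9_general ![1, a] (torusFactors F a) 0 rfl (card_torusFactors_zero_le ha) Y
      (hY.trans (vecCons_image_piFinset_torusFactors a).symm) α (lt_card_torusFactors_zero hα a)
end
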